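/- The matrix U = P_11 + P_12·S is nonnegative, its i-th row sums to λ_i (i.e. U·1 = Λ·1), its spectral radius satisfies ρ(U) < 1, and (I − U)^{-1} = Σ_{k=0}^∞ U^k has all entries strictly positive. -/

import Mathlib

/-!
A nonnegative matrix `A` with all row sums `< 1` has `ℓ^∞`-operator norm `< 1`. Hence its spectral
radius is `< 1`, and `(1 - A)⁻¹` is the Neumann series `∑ A ^ k`, which is entrywise nonnegative.

Applied to `P₂₂`, whose `i`-th row sum is `1 - φ_i`, this makes `S` well defined and nonnegative,
with `S = Φ + P₂₂ S`. The latter identity gives the key formula `U = Λ(W̃ + ŴS)`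
(`Umat_eq`) and the bound `S_jj ≥ φ_j > 0`; moreover `S·1 = 1`, because `(1 - P₂₂)·1 = Φ·1`. So `U`
is nonnegative with row sums `λ_i < 1`, and the Neumann argument applies to `U` as well.

Finally `U_ij > 0` whenever `W_ij > 0` (`Umat_pos`). Writing `B = (1 - U)⁻¹ = 1 + U B`, one has
`B_ii ≥ 1` and `B_bi ≥ U_ba B_ai`, so positivity of the `i`-th column of `B` spreads from `i` along
the edges of the strongly connected graph of `W`.
-/

open Matrix BigOperators

/-- The diagonal part `W̃` of `W`. -/
noncomputable def diagPart {n : ℕ} (W : Matrix (Fin n) (Fin n) ℝ) :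
    Matrix (Fin n) (Fin n) ℝ :=
  Matrix.diagonal (fun i => W i i)

/-- The off-diagonal part `Ŵ` of `W`. -/
noncomputable def offDiagPart {n : ℕ} (W : Matrix (Fin n) (Fin n) ℝ) :
    Matrix (Fin n) (Fin n) ℝ :=
  W - diagPart W

/-- The block `P₁₁ = Λ(W̃ + ŴΦ)`. -/
noncomputable def P11 {n : ℕ} (W : Matrix (Fin n) (Fin n) ℝ)
    (lam phi : Fin n → ℝ) : Matrix (Fin n) (Fin n) ℝ :=
  Matrix.diagonal lam * (diagPart W + offDiagPart W * Matrix.diagonal phi)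

/-- The block `P₁₂ = ΛŴ(I − Φ)M`. -/
noncomputable def P12 {n : ℕ} (W M : Matrix (Fin n) (Fin n) ℝ)
    (lam phi : Fin n → ℝ) : Matrix (Fin n) (Fin n) ℝ :=
  Matrix.diagonal lam * offDiagPart W * (1 - Matrix.diagonal phi) * M

/-- The block `P₂₂ = (I − Φ)M`. -/
noncomputable def P22 {n : ℕ} (M : Matrix (Fin n) (Fin n) ℝ)
    (phi : Fin n → ℝ) : Matrix (Fin n) (Fin n) ℝ :=
  (1 - Matrix.diagonal phi) * M

/-- The matrix `S = (I − P₂₂)⁻¹ P₂₁`, where `P₂₁ = Φ`. -/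
noncomputable def Smat {n : ℕ} (M : Matrix (Fin n) (Fin n) ℝ)
    (phi : Fin n → ℝ) : Matrix (Fin n) (Fin n) ℝ :=
  (1 - P22 M phi)⁻¹ * Matrix.diagonal phi

/-- The matrix `U = P₁₁ + P₁₂·S`. -/
noncomputable def Umat {n : ℕ} (W M : Matrix (Fin n) (Fin n) ℝ)
    (lam phi : Fin n → ℝ) : Matrix (Fin n) (Fin n) ℝ :=
  P11 W lam phi + P12 W M lam phi * Smat M phi

section Neumann

attribute [local instance] Matrix.linftyOpNormedRing Matrix.linftyOpNormedAlgebra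

variable {n : ℕ}

lemma linfty_nnnorm_lt_one {𝕜 : Type*} [RCLike 𝕜] (A : Matrix (Fin n) (Fin n) ℝ)
    (hA : ∀ i j, 0 ≤ A i j) (hrow : ∀ i, ∑ j, A i j < 1) :
    ‖A.map (fun x : ℝ => (x : 𝕜))‖₊ < 1 := by
  rw [Matrix.linfty_opNNNorm_def, Finset.sup_lt_iff (by simp)]
  intro i _
  rw [← NNReal.coe_lt_coe]
  push_cast
  calc ∑ j, ‖A.map (fun x : ℝ => (x : 𝕜)) i j‖ = ∑ j, A i j := by
        refine Finset.sum_congr rfl fun j _ => ?_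
        simp [abs_of_nonneg (hA i j)]
    _ < 1 := hrow i

lemma spectralRadius_lt_one_of_row_sum (A : Matrix (Fin n) (Fin n) ℝ)
    (hA : ∀ i j, 0 ≤ A i j) (hrow : ∀ i, ∑ j, A i j < 1) :
    spectralRadius ℂ (A.map Complex.ofReal) < 1 := by
  have h := linfty_nnnorm_lt_one (𝕜 := ℂ) A hA hrow
  have : CompleteSpace (Matrix (Fin n) (Fin n) ℂ) := FiniteDimensional.complete ℂ _
  rcases isEmpty_or_nonempty (Fin n) with hn | hn
  · have : Subsingleton (Matrix (Fin n) (Fin n) ℂ) := inferInstance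
    simp
  · have : NormOneClass (Matrix (Fin n) (Fin n) ℂ) := Matrix.linfty_opNormOneClass
    exact (spectrum.spectralRadius_le_nnnorm (𝕜 := ℂ) _).trans_lt (by exact_mod_cast h)

lemma pow_entry_nonneg {A : Matrix (Fin n) (Fin n) ℝ} (hA : ∀ i j, 0 ≤ A i j) (k : ℕ) :
    ∀ i j, 0 ≤ (A ^ k) i j := by
  induction k with
  | zero => intro i j; rw [pow_zero, Matrix.one_apply]; split_ifs <;> norm_num
  | succ k ih =>
    intro i j
    rw [pow_succ, Matrix.mul_apply]
    exact Finset.sum_nonneg fun l _ => mul_nonneg (ih i l) (hA l j)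

lemma neumann_of_row_sum (A : Matrix (Fin n) (Fin n) ℝ)
    (hA : ∀ i j, 0 ≤ A i j) (hrow : ∀ i, ∑ j, A i j < 1) :
    IsUnit (1 - A) ∧ (1 - A)⁻¹ = ∑' k : ℕ, A ^ k ∧ ∀ i j, 0 ≤ (1 - A)⁻¹ i j := by
  have h : ‖A‖ < 1 := by
    have := linfty_nnnorm_lt_one (𝕜 := ℝ) A hA hrow
    exact_mod_cast this
  have : CompleteSpace (Matrix (Fin n) (Fin n) ℝ) := FiniteDimensional.complete ℝ _
  have hu : IsUnit (1 - A) := isUnit_one_sub_of_norm_lt_one h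
  have hs : Summable (fun k : ℕ => A ^ k) := summable_geometric_of_norm_lt_one h
  have hinv : (1 - A)⁻¹ = ∑' k : ℕ, A ^ k :=
    Matrix.inv_eq_right_inv (mul_neg_geom_series A h)
  refine ⟨hu, hinv, fun i j => ?_⟩
  have hsum : HasSum (fun k : ℕ => A ^ k) (1 - A)⁻¹ := hinv ▸ hs.hasSum
  have h2 : HasSum (fun k : ℕ => (A ^ k) i j) ((1 - A)⁻¹ i j) :=
    Pi.hasSum.1 (Pi.hasSum.1 hsum i) j
  exact h2.nonneg fun k => pow_entry_nonneg hA k i j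

end Neumann

section Aux

variable {n : ℕ}

lemma inv_one_sub_eq {A : Matrix (Fin n) (Fin n) ℝ} (h : IsUnit (1 - A)) :
    (1 - A)⁻¹ = 1 + A * (1 - A)⁻¹ := by
  have := Matrix.mul_nonsing_inv (1 - A) ((Matrix.isUnit_iff_isUnit_det _).1 h)
  rw [sub_mul, one_mul] at this
  exact sub_eq_iff_eq_add.1 this

lemma P22_apply (M : Matrix (Fin n) (Fin n) ℝ) (phi : Fin n → ℝ) (i j : Fin n) :
    P22 M phi i j = (1 - phi i) * M i j := by
  simp [P22, sub_mul, Matrix.sub_apply, Matrix.diagonal_mul]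

lemma offDiagPart_apply (W : Matrix (Fin n) (Fin n) ℝ) (i j : Fin n) :
    offDiagPart W i j = if i = j then 0 else W i j := by
  by_cases h : i = j
  · subst h; simp [offDiagPart, diagPart]
  · simp [offDiagPart, diagPart, h]

lemma offDiagPart_nonneg {W : Matrix (Fin n) (Fin n) ℝ} (hW : ∀ i j, 0 ≤ W i j) (i j : Fin n) :
    0 ≤ offDiagPart W i j := by
  rw [offDiagPart_apply]; split_ifs
  · exact le_rfl
  · exact hW i j

/-- The facts about `S` that matter: it is nonnegative, satisfies the fixed-point equation
`S = Φ + P₂₂ S`, has positive diagonal, and is row-stochastic. -/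
lemma Smat_props (M : Matrix (Fin n) (Fin n) ℝ)
    (hMnn : ∀ i j, 0 ≤ M i j) (hMrow : ∀ i, ∑ j, M i j = 1)
    (phi : Fin n → ℝ) (hphi : ∀ i, phi i ∈ Set.Ioo (0 : ℝ) 1) :
    (∀ i j, 0 ≤ Smat M phi i j) ∧
    Smat M phi = Matrix.diagonal phi + P22 M phi * Smat M phi ∧
    (∀ j, 0 < Smat M phi j j) ∧
    Smat M phi *ᵥ (fun _ => (1 : ℝ)) = fun _ => 1 := by
  have hnn : ∀ i j, 0 ≤ P22 M phi i j := fun i j => by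
    rw [P22_apply]
    exact mul_nonneg (by linarith [(hphi i).2]) (hMnn i j)
  have hrow : ∀ i, ∑ j, P22 M phi i j = 1 - phi i := fun i => by
    simp only [P22_apply]
    rw [← Finset.mul_sum, hMrow, mul_one]
  obtain ⟨hu, -, hinv⟩ := neumann_of_row_sum (P22 M phi) hnn
    (fun i => by rw [hrow]; linarith [(hphi i).1])
  have hS : ∀ i j, 0 ≤ Smat M phi i j := fun i j => by
    rw [Smat, Matrix.mul_diagonal]
    exact mul_nonneg (hinv i j) (hphi j).1.le
  have hfix : Smat M phi = Matrix.diagonal phi + P22 M phi * Smat M phi := by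
    conv_lhs => rw [Smat, inv_one_sub_eq hu, add_mul, one_mul, Matrix.mul_assoc]
    rfl
  refine ⟨hS, hfix, fun j => ?_, ?_⟩
  · rw [hfix, Matrix.add_apply, Matrix.diagonal_apply_eq, Matrix.mul_apply]
    exact add_pos_of_pos_of_nonneg (hphi j).1
      (Finset.sum_nonneg fun l _ => mul_nonneg (hnn j l) (hS l j))
  · have h1 : Matrix.diagonal phi *ᵥ (fun _ => (1 : ℝ)) =
        (1 - P22 M phi) *ᵥ (fun _ => (1 : ℝ)) := by
      rw [Matrix.sub_mulVec, Matrix.one_mulVec]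
      ext i
      rw [Matrix.mulVec_diagonal, Pi.sub_apply, Matrix.mulVec, dotProduct]
      simp only [mul_one]
      rw [hrow]; ring
    rw [Smat, ← Matrix.mulVec_mulVec, h1, Matrix.mulVec_mulVec,
      Matrix.nonsing_inv_mul _ ((Matrix.isUnit_iff_isUnit_det _).1 hu), Matrix.one_mulVec]

/-- Absorbing the fixed-point equation of `S`, `U` becomes `Λ(W̃ + ŴS)`. -/
lemma Umat_eq (W M : Matrix (Fin n) (Fin n) ℝ) (lam phi : Fin n → ℝ)
    (hS : Smat M phi = Matrix.diagonal phi + P22 M phi * Smat M phi) :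
    Umat W M lam phi =
      Matrix.diagonal lam * (diagPart W + offDiagPart W * Smat M phi) := by
  conv_rhs => rw [hS]
  simp only [Umat, P11, P12, P22]
  noncomm_ring

lemma Umat_apply (W M : Matrix (Fin n) (Fin n) ℝ) (lam phi : Fin n → ℝ)
    (hS : Smat M phi = Matrix.diagonal phi + P22 M phi * Smat M phi) (i j : Fin n) :
    Umat W M lam phi i j =
      lam i * (diagPart W i j + ∑ l, offDiagPart W i l * Smat M phi l j) := by
  rw [Umat_eq W M lam phi hS, Matrix.diagonal_mul, Matrix.add_apply, Matrix.mul_apply]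

lemma diagPart_nonneg {W : Matrix (Fin n) (Fin n) ℝ} (hW : ∀ i j, 0 ≤ W i j) (i j : Fin n) :
    0 ≤ diagPart W i j := by
  rw [diagPart, Matrix.diagonal_apply]; split_ifs
  · exact hW i i
  · exact le_rfl

lemma Umat_pos {W M : Matrix (Fin n) (Fin n) ℝ} {lam phi : Fin n → ℝ}
    (hWnn : ∀ i j, 0 ≤ W i j) (hlam : ∀ i, 0 < lam i)
    (hS : Smat M phi = Matrix.diagonal phi + P22 M phi * Smat M phi)
    (hSnn : ∀ i j, 0 ≤ Smat M phi i j) (hSd : ∀ j, 0 < Smat M phi j j)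
    {i j : Fin n} (h : 0 < W i j) : 0 < Umat W M lam phi i j := by
  rw [Umat_apply W M lam phi hS]
  refine mul_pos (hlam i) ?_
  have hterm : ∀ l ∈ Finset.univ, 0 ≤ offDiagPart W i l * Smat M phi l j := fun l _ =>
    mul_nonneg (offDiagPart_nonneg hWnn i l) (hSnn l j)
  by_cases hij : i = j
  · subst hij
    exact add_pos_of_pos_of_nonneg (by simpa [diagPart] using h) (Finset.sum_nonneg hterm)
  · refine add_pos_of_nonneg_of_pos (diagPart_nonneg hWnn i j) ?_
    refine lt_of_lt_of_le ?_ (Finset.single_le_sum hterm (Finset.mem_univ j))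
    rw [offDiagPart_apply, if_neg hij]
    exact mul_pos h (hSd j)

end Aux

/-- The matrix `U = P₁₁ + P₁₂·S` is nonnegative, its `i`-th
row sums to `λ_i` (i.e. `U·1 = Λ·1`), its spectral radius is `< 1`, `I − U` is
invertible and `(I − U)⁻¹ = ∑_{k=0}^∞ U^k` has all entries strictly positive. -/
theorem stmt_5 {n : ℕ} (hn : 2 ≤ n) (W M : Matrix (Fin n) (Fin n) ℝ)
    (hWnn : ∀ i j, 0 ≤ W i j) (hWrow : ∀ i, ∑ j, W i j = 1)
    (hWirr : ∀ i j, i ≠ j → Relation.TransGen (fun a b => 0 < W b a) i j)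
    (hWprim : ∃ k : ℕ, 0 < k ∧ ∀ i j, 0 < (W ^ k) i j)
    (hMnn : ∀ i j, 0 ≤ M i j) (hMrow : ∀ i, ∑ j, M i j = 1)
    (hMW : ∀ i j, 0 < M i j ↔ 0 < W i j)
    (lam phi : Fin n → ℝ)
    (hlam : ∀ i, lam i ∈ Set.Ioo (0 : ℝ) 1)
    (hphi : ∀ i, phi i ∈ Set.Ioo (0 : ℝ) 1) :
    (∀ i j, 0 ≤ Umat W M lam phi i j) ∧
    (Umat W M lam phi *ᵥ (fun _ => (1 : ℝ)) = fun i => lam i) ∧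
    spectralRadius ℂ ((Umat W M lam phi).map Complex.ofReal) < 1 ∧
    IsUnit (1 - Umat W M lam phi) ∧
    (1 - Umat W M lam phi)⁻¹ = (∑' k : ℕ, (Umat W M lam phi) ^ k) ∧
    (∀ i j, 0 < (1 - Umat W M lam phi)⁻¹ i j) := by
  obtain ⟨hSnn, hSfix, hSd, hS1⟩ := Smat_props M hMnn hMrow phi hphi
  have hUnn : ∀ i j, 0 ≤ Umat W M lam phi i j := fun i j => by
    rw [Umat_apply W M lam phi hSfix]
    exact mul_nonneg (hlam i).1.le (add_nonneg (diagPart_nonneg hWnn i j)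
      (Finset.sum_nonneg fun l _ => mul_nonneg (offDiagPart_nonneg hWnn i l) (hSnn l j)))
  have hU1 : Umat W M lam phi *ᵥ (fun _ => (1 : ℝ)) = fun i => lam i := by
    rw [Umat_eq W M lam phi hSfix, ← Matrix.mulVec_mulVec, Matrix.add_mulVec,
      ← Matrix.mulVec_mulVec, hS1, ← Matrix.add_mulVec, offDiagPart, add_sub_cancel]
    ext i
    rw [Matrix.mulVec_diagonal, Matrix.mulVec, dotProduct]
    simp [hWrow]
  have hUrow : ∀ i, ∑ j, Umat W M lam phi i j < 1 := fun i => by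
    have := congrFun hU1 i
    simp only [Matrix.mulVec, dotProduct, mul_one] at this
    rw [this]
    exact (hlam i).2
  obtain ⟨hu, hinv, hBnn⟩ := neumann_of_row_sum _ hUnn hUrow
  refine ⟨hUnn, hU1, spectralRadius_lt_one_of_row_sum _ hUnn hUrow, hu, hinv, ?_⟩
  have hB := inv_one_sub_eq hu
  set B := (1 - Umat W M lam phi)⁻¹
  have hBij : ∀ a b, B a b = (1 : Matrix (Fin n) (Fin n) ℝ) a b +
      ∑ l, Umat W M lam phi a l * B l b := fun a b => by
    conv_lhs => rw [hB, Matrix.add_apply, Matrix.mul_apply]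
  have hterm : ∀ a b, ∀ l ∈ Finset.univ, 0 ≤ Umat W M lam phi a l * B l b := fun a b l _ =>
    mul_nonneg (hUnn a l) (hBnn l b)
  have hdiag : ∀ i, 0 < B i i := fun i => by
    rw [hBij, Matrix.one_apply_eq]
    exact add_pos_of_pos_of_nonneg one_pos (Finset.sum_nonneg (hterm i i))
  have hstep : ∀ i a b, 0 < W b a → 0 < B a i → 0 < B b i := fun i a b hW hBa => by
    rw [hBij]
    refine add_pos_of_nonneg_of_pos ?_ ?_
    · rw [Matrix.one_apply]; split_ifs <;> norm_num
    · exact lt_of_lt_of_le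
        (mul_pos (Umat_pos hWnn (fun i => (hlam i).1) hSfix hSnn hSd hW) hBa)
        (Finset.single_le_sum (hterm b i) (Finset.mem_univ a))
  have hpath : ∀ i j, Relation.TransGen (fun a b => 0 < W b a) i j → 0 < B j i := by
    intro i j h
    induction h with
    | single h => exact hstep i _ _ h (hdiag i)
    | tail _ h ih => exact hstep i _ _ h ih
  intro j i
  by_cases hij : i = j
  · exact hij ▸ hdiag i
  · exact hpath i j (hWirr i j hij)
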